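/- Suppose α > −1 and (α+1)(3α+4)² − α⁴/4 < 0 (this holds exactly when α < α₋^{(c)} ≈ −0.902 or α > α₊^{(c)} ≈ 39.450). Then the 3D Lamé system is not positive definite with weight Φ: there exists u ∈ C_0^∞(ℝ³∖{0};ℝ³) with ∫_{ℝ³}(Lu)·(Φu) dx < 0. -/

import Mathlib

/-!
The form fails to be nonnegative on rapidly oscillating fields. For a direction `k`, a constant
vector `w` and a cutoff `φ`, put `u_c = φ cos(N k·x) w` and `u_s = φ sin(N k·x) w`. Adding the two
energy densities, the terms linear in `N` cancel pointwise and `cos² + sin² = 1` leaves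
(`density_cos_add_density_sin`)

  `E(u_c) + E(u_s) = E(φ w) + N² ∫ φ² q`,  `q(x) = (|k|² w + α (k·w) k) · Φ(x) w`.

If `q < 0` on the support of `φ`, the right side is negative for large `N`, so one of the two fields
has negative energy. By continuity it suffices to have `q < 0` at the single point `e₀ = (1,0,0)`.
With `k = (1,1,0)` and `w = (2(α+2)², -α(3α+4), 0)` the value `q(e₀)` is a positive multiple of
`8(α+1)(α+2)³ - α²(3α+4)² = 4((α+1)(3α+4)² - α⁴/4) - 4α²(α+1)`, which the hypothesis makes
negative (`symbol_neg`).
-/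


open MeasureTheory Metric Real Filter

noncomputable section

/-- `ℝ³` as Euclidean space. -/
abbrev E3 : Type := EuclideanSpace ℝ (Fin 3)

/-- Partial derivative `∂ᵢ f` on `ℝ³`. -/
def pd (i : Fin 3) (f : E3 → ℝ) (x : E3) : ℝ :=
  fderiv ℝ f x (EuclideanSpace.single i 1)

/-- Laplacian on `ℝ³`. -/
def lap (f : E3 → ℝ) (x : E3) : ℝ := ∑ i, pd i (pd i f) x

/-- Divergence of a vector field on `ℝ³`. -/
def divg (u : E3 → Fin 3 → ℝ) (x : E3) : ℝ := ∑ k, pd k (fun y => u y k) x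

/-- The 3D Lamé operator `(Lu)ᵢ = -Δuᵢ - α ∂ᵢ (div u)`. -/
def lame (α : ℝ) (u : E3 → Fin 3 → ℝ) (x : E3) (i : Fin 3) : ℝ :=
  - lap (fun y => u y i) x - α * pd i (divg u) x

/-- The constant `c_α = (α+2)/(8π(α+1))`. -/
def cA (α : ℝ) : ℝ := (α + 2) / (8 * Real.pi * (α + 1))

/-- The fundamental matrix `Φ` of the 3D Lamé system:
`Φ_ij(x) = c_α |x|⁻¹ (δ_ij + (α/(α+2)) xᵢxⱼ/|x|²)`. -/
def Phi (α : ℝ) (x : E3) (i j : Fin 3) : ℝ :=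
  cA α * ‖x‖⁻¹ * ((if i = j then (1 : ℝ) else 0) + (α / (α + 2)) * (x i * x j) / ‖x‖ ^ 2)

/-- `u ∈ C₀^∞(U; ℝ³)`: smooth, compactly supported, with support inside `U`. -/
def IsTestOn (U : Set E3) (u : E3 → Fin 3 → ℝ) : Prop :=
  ContDiff ℝ (⊤ : ℕ∞) u ∧ HasCompactSupport u ∧ tsupport u ⊆ U

/-- `∫_{ℝ³} (Lu)·(Φ(·-y) u) dx`. -/
def lameEnergy (α : ℝ) (u : E3 → Fin 3 → ℝ) (y : E3) : ℝ :=
  ∫ x : E3, ∑ i, ∑ j, lame α u x i * Phi α (x - y) i j * u x j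

/-! ### Partial derivatives -/

lemma pd_mul {f g : E3 → ℝ} (hf : ContDiff ℝ (⊤ : ℕ∞) f) (hg : ContDiff ℝ (⊤ : ℕ∞) g) (i : Fin 3) :
    pd i (fun y => f y * g y) = fun x => pd i f x * g x + f x * pd i g x := by
  funext x
  have h1 : DifferentiableAt ℝ f x := (hf.differentiable (by simp)) x
  have h2 : DifferentiableAt ℝ g x := (hg.differentiable (by simp)) x
  simp only [pd]
  rw [fderiv_fun_mul h1 h2]
  simp
  ring

lemma pd_mul_const {f : E3 → ℝ} (hf : ContDiff ℝ (⊤ : ℕ∞) f) (c : ℝ) (i : Fin 3) :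
    pd i (fun y => f y * c) = fun x => pd i f x * c := by
  funext x
  have h1 : DifferentiableAt ℝ f x := (hf.differentiable (by simp)) x
  simp only [pd]
  rw [fderiv_mul_const h1]
  simp
  ring

lemma pd_add {f g : E3 → ℝ} (hf : ContDiff ℝ (⊤ : ℕ∞) f) (hg : ContDiff ℝ (⊤ : ℕ∞) g) (i : Fin 3) :
    pd i (fun y => f y + g y) = fun x => pd i f x + pd i g x := by
  funext x
  have h1 : DifferentiableAt ℝ f x := (hf.differentiable (by simp)) x
  have h2 : DifferentiableAt ℝ g x := (hg.differentiable (by simp)) x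
  simp only [pd]
  rw [fderiv_fun_add h1 h2]
  simp

lemma contDiff_pd {f : E3 → ℝ} (hf : ContDiff ℝ (⊤ : ℕ∞) f) (i : Fin 3) :
    ContDiff ℝ (⊤ : ℕ∞) (pd i f) := by
  have h : ContDiff ℝ (⊤ : ℕ∞) (fderiv ℝ f) := hf.fderiv_right (by simp)
  exact h.clm_apply contDiff_const

/-- On a field `f w` with constant direction `w`, the Lamé operator is linear in the Hessian
of `f`. -/
lemma lame_mul_const (α : ℝ) {f : E3 → ℝ} (hf : ContDiff ℝ (⊤ : ℕ∞) f) (w : Fin 3 → ℝ)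
    (x : E3) (i : Fin 3) :
    lame α (fun y k => f y * w k) x i
      = -(∑ j, pd j (pd j f) x) * w i - α * ∑ k, pd i (pd k f) x * w k := by
  have hd : divg (fun y k => f y * w k)
      = fun y => pd 0 f y * w 0 + pd 1 f y * w 1 + pd 2 f y * w 2 := by
    funext y
    simp only [divg, Fin.sum_univ_three, pd_mul_const hf]
  have hs : ∀ k, ContDiff ℝ (⊤ : ℕ∞) (fun y => pd k f y * w k) := fun k =>
    (contDiff_pd hf k).mul contDiff_const
  simp only [lame, lap, hd, pd_mul_const hf, pd_mul_const (contDiff_pd hf _),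
    pd_add ((hs 0).add (hs 1)) (hs 2), pd_add (hs 0) (hs 1), Fin.sum_univ_three]
  ring

/-! ### The energy density of a field with constant direction -/

/-- The energy density `(Lu)·(Φu)` of the field `u = f w`, for a constant vector `w`. -/
def density (α : ℝ) (w : Fin 3 → ℝ) (f : E3 → ℝ) (x : E3) : ℝ :=
  ∑ i, ∑ j, lame α (fun y k => f y * w k) x i * Phi α x i j * (f x * w j)

/-- `(|k|² w + α (k·w) k) · Φ(x) w`: the principal symbol of `L` at the frequency `k` applied to
`w`, paired with `Φ(x) w`. -/
def symbolForm (α : ℝ) (k w : Fin 3 → ℝ) (x : E3) : ℝ :=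
  ∑ i, ∑ j, ((∑ l, k l * k l) * w i + α * (k i * ∑ l, k l * w l)) * Phi α x i j * w j

/-- The functions `C = cos(N k·x)` and `S = sin(N k·x)` enter only through their first-order
system and `C² + S² = 1`. -/
lemma density_cos_add_density_sin (α N : ℝ) (k w : Fin 3 → ℝ) {φ C S : E3 → ℝ}
    (hφ : ContDiff ℝ (⊤ : ℕ∞) φ) (hC : ContDiff ℝ (⊤ : ℕ∞) C) (hS : ContDiff ℝ (⊤ : ℕ∞) S)
    (hCd : ∀ i, pd i C = fun x => S x * (-(N * k i)))
    (hSd : ∀ i, pd i S = fun x => C x * (N * k i))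
    (hCS : ∀ x, C x ^ 2 + S x ^ 2 = 1) (x : E3) :
    density α w (fun y => φ y * C y) x + density α w (fun y => φ y * S y) x
      = density α w φ x + N ^ 2 * (φ x ^ 2 * symbolForm α k w x) := by
  have hp := contDiff_pd hφ
  have e1 : ∀ i j, pd i (pd j (fun y => φ y * C y)) x
      = pd i (pd j φ) x * C x - (N * k i) * pd j φ x * S x - (N * k j) * pd i φ x * S x
        - (N * k i) * (N * k j) * φ x * C x := by
    intro i j
    rw [pd_mul hφ hC, pd_add ((hp j).mul hC) (hφ.mul (contDiff_pd hC j)), pd_mul (hp j) hC,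
      pd_mul hφ (contDiff_pd hC j), hCd j, pd_mul_const hS, hSd i, hCd i]
    ring
  have e2 : ∀ i j, pd i (pd j (fun y => φ y * S y)) x
      = pd i (pd j φ) x * S x + (N * k i) * pd j φ x * C x + (N * k j) * pd i φ x * C x
        - (N * k i) * (N * k j) * φ x * S x := by
    intro i j
    rw [pd_mul hφ hS, pd_add ((hp j).mul hS) (hφ.mul (contDiff_pd hS j)), pd_mul (hp j) hS,
      pd_mul hφ (contDiff_pd hS j), hSd j, pd_mul_const hC, hSd i, hCd i]
    ring
  simp only [density, symbolForm, Finset.mul_sum, ← Finset.sum_add_distrib]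
  refine Finset.sum_congr rfl fun i _ => Finset.sum_congr rfl fun j _ => ?_
  rw [lame_mul_const α (hφ.mul hC), lame_mul_const α (hφ.mul hS), lame_mul_const α hφ]
  simp only [e1, e2, Fin.sum_univ_three]
  have h := hCS x
  generalize Phi α x i j = P
  have h' : S x ^ 2 = 1 - C x ^ 2 := by linarith
  ring_nf
  simp only [h']
  ring

lemma continuousOn_Phi (α : ℝ) (i j : Fin 3) :
    ContinuousOn (fun x => Phi α x i j) ({(0 : E3)}ᶜ) := by
  have hx : ∀ x ∈ ({(0 : E3)}ᶜ : Set E3), ‖x‖ ≠ 0 := fun x hx => norm_ne_zero_iff.2 hx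
  have hc : ∀ i : Fin 3, Continuous (fun x : E3 => x i) := fun i => by fun_prop
  unfold Phi
  refine (continuousOn_const.mul (continuousOn_id.norm.inv₀ hx)).mul
    (continuousOn_const.add (ContinuousOn.div ?_ ?_ fun x h => pow_ne_zero 2 (hx x h)))
  · exact (continuous_const.mul ((hc i).mul (hc j))).continuousOn
  · fun_prop

lemma continuousOn_symbolForm (α : ℝ) (k w : Fin 3 → ℝ) :
    ContinuousOn (symbolForm α k w) ({(0 : E3)}ᶜ) := by
  unfold symbolForm
  exact continuousOn_finsetSum _ fun i _ => continuousOn_finsetSum _ fun j _ =>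
    (continuousOn_const.mul (continuousOn_Phi α i j)).mul continuousOn_const

/-- The singularity of `g` at the origin is invisible to a cutoff `f` vanishing near it. -/
lemma continuous_mul_of_cutoff {f g : E3 → ℝ} (hf : Continuous f)
    (h0 : tsupport f ⊆ ({(0 : E3)}ᶜ)) (hg : ContinuousOn g ({(0 : E3)}ᶜ)) :
    Continuous (fun x => f x * g x) := by
  rw [continuous_iff_continuousAt]
  intro x
  by_cases hx : x = 0
  · have : x ∉ tsupport f := fun h => h0 h hx
    have he : f =ᶠ[nhds x] 0 := notMem_tsupport_iff_eventuallyEq.1 this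
    have he' : (fun _ : E3 => (0 : ℝ)) =ᶠ[nhds x] (fun x => f x * g x) := by
      filter_upwards [he] with y hy
      simp [hy]
    exact continuousAt_const.congr he'
  · exact hf.continuousAt.mul (hg.continuousAt (isOpen_compl_singleton.mem_nhds hx))

lemma integrable_density (α : ℝ) (w : Fin 3 → ℝ) {f : E3 → ℝ} (hf : ContDiff ℝ (⊤ : ℕ∞) f)
    (hc : HasCompactSupport f) (h0 : tsupport f ⊆ ({(0 : E3)}ᶜ)) :
    Integrable (density α w f) := by
  have e : density α w f = fun x => f x * ∑ i, ∑ j,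
      (-(∑ j, pd j (pd j f) x) * w i - α * ∑ k, pd i (pd k f) x * w k) * Phi α x i j * w j := by
    funext x
    simp only [density, lame_mul_const α hf, Finset.mul_sum (a := f x)]
    refine Finset.sum_congr rfl fun i _ => Finset.sum_congr rfl fun j _ => ?_
    ring
  have hp : ∀ i j, Continuous (pd i (pd j f)) := fun i j =>
    (contDiff_pd (contDiff_pd hf j) i).continuous
  rw [e]
  refine Continuous.integrable_of_hasCompactSupport
    (continuous_mul_of_cutoff hf.continuous h0 ?_) hc.mul_right
  refine continuousOn_finsetSum _ fun i _ => continuousOn_finsetSum _ fun j _ =>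
    (ContinuousOn.mul (Continuous.continuousOn ?_) (continuousOn_Phi α i j)).mul continuousOn_const
  fun_prop

lemma isTestOn_mul_const (w : Fin 3 → ℝ) {f : E3 → ℝ} (hf : ContDiff ℝ (⊤ : ℕ∞) f)
    (hc : HasCompactSupport f) (h0 : tsupport f ⊆ ({(0 : E3)}ᶜ)) :
    IsTestOn ({(0 : E3)}ᶜ) (fun y k => f y * w k) := by
  have hs : Function.support (fun y k => f y * w k) ⊆ Function.support f := by
    intro y hy h
    exact hy (by funext k; simp [h])
  refine ⟨contDiff_pi.2 fun k => hf.mul contDiff_const, hc.mono hs, (closure_mono hs).trans h0⟩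

/-! ### The choice of direction and frequency -/

/-- At `e₀ = (1,0,0)` the matrix `Φ` is diagonal and `q(e₀)` is a binary quadratic form in the first
two entries of `w`; the chosen `w` makes it `c_α (8(α+1)(α+2)³ - α²(3α+4)²) (α+2)`. -/
lemma symbol_neg (α : ℝ) (hα : -1 < α) (h : (α + 1) * (3 * α + 4) ^ 2 - α ^ 4 / 4 < 0) :
    symbolForm α ![1, 1, 0] ![2 * (α + 2) ^ 2, -(α * (3 * α + 4)), 0]
      (EuclideanSpace.single 0 1) < 0 := by
  have h2 : 0 < α + 2 := by linarith
  have hc : 0 < cA α := by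
    unfold cA
    have : 0 < α + 1 := by linarith
    positivity
  have e : symbolForm α ![1, 1, 0] ![2 * (α + 2) ^ 2, -(α * (3 * α + 4)), 0]
      (EuclideanSpace.single 0 1)
      = cA α * (α + 2) * (8 * (α + 1) * (α + 2) ^ 3 - α ^ 2 * (3 * α + 4) ^ 2) := by
    simp [symbolForm, Phi, Fin.sum_univ_three]
    field_simp
    ring
  rw [e]
  refine mul_neg_of_pos_of_neg (mul_pos hc h2) ?_
  nlinarith [mul_nonneg (sq_nonneg α) (by linarith : 0 ≤ α + 1)]

/-- The phase `N (x₀ + x₁)`, that is `N k·x` for `k = (1,1,0)`. -/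
def phase (N : ℝ) (x : E3) : ℝ := N * (x 0 + x 1)

lemma contDiff_phase (N : ℝ) : ContDiff ℝ (⊤ : ℕ∞) (phase N) := by
  unfold phase
  fun_prop

lemma fderiv_phase (N : ℝ) (x : E3) (i : Fin 3) :
    fderiv ℝ (phase N) x (EuclideanSpace.single i 1) = N * ![1, 1, 0] i := by
  have h : HasFDerivAt (phase N)
      (N • (EuclideanSpace.proj (𝕜 := ℝ) (0 : Fin 3)
        + EuclideanSpace.proj (𝕜 := ℝ) (1 : Fin 3) : E3 →L[ℝ] ℝ)) x :=
    ((EuclideanSpace.proj (𝕜 := ℝ) (0 : Fin 3)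
        + EuclideanSpace.proj (𝕜 := ℝ) (1 : Fin 3) : E3 →L[ℝ] ℝ).hasFDerivAt).const_mul N
  rw [h.fderiv]
  fin_cases i <;> simp

lemma pd_cos_phase (N : ℝ) (i : Fin 3) :
    pd i (fun x => Real.cos (phase N x))
      = fun x => Real.sin (phase N x) * (-(N * ![1, 1, 0] i)) := by
  funext x
  have hd : DifferentiableAt ℝ (phase N) x := (contDiff_phase N).differentiable (by simp) x
  rw [pd, fderiv_cos hd]
  simp [fderiv_phase]

lemma pd_sin_phase (N : ℝ) (i : Fin 3) :
    pd i (fun x => Real.sin (phase N x))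
      = fun x => Real.cos (phase N x) * (N * ![1, 1, 0] i) := by
  funext x
  have hd : DifferentiableAt ℝ (phase N) x := (contDiff_phase N).differentiable (by simp) x
  rw [pd, fderiv_sin hd]
  simp [fderiv_phase]


/-- If `(α+1)(3α+4)² - α⁴/4 < 0` then the 3D Lamé system is not positive
definite with weight `Φ`. -/
theorem lame_not_weighted_positive_definite
    (α : ℝ) (hα : -1 < α)
    (h : (α + 1) * (3 * α + 4) ^ 2 - α ^ 4 / 4 < 0) :
    ∃ u : E3 → Fin 3 → ℝ, IsTestOn ({(0 : E3)}ᶜ) u ∧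
      (∫ x : E3, ∑ i, ∑ j, lame α u x i * Phi α x i j * u x j) < 0 := by
  set k : Fin 3 → ℝ := ![1, 1, 0] with hk
  set w : Fin 3 → ℝ := ![2 * (α + 2) ^ 2, -(α * (3 * α + 4)), 0] with hw
  set p : E3 := EuclideanSpace.single 0 1 with hp
  have hp0 : p ∈ ({(0 : E3)}ᶜ : Set E3) := by simp [hp]
  have hq : symbolForm α k w p < 0 := symbol_neg α hα h
  -- A closed ball around `p` that avoids the origin and on which the symbol stays negative.
  have hev : ∀ᶠ x in nhds p, symbolForm α k w x < 0 ∧ x ∈ ({(0 : E3)}ᶜ : Set E3) :=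
    (((continuousOn_symbolForm α k w).continuousAt
      (isOpen_compl_singleton.mem_nhds hp0)).eventually_lt_const hq).and
      (isOpen_compl_singleton.mem_nhds hp0)
  obtain ⟨r, hr, hball⟩ := Metric.nhds_basis_closedBall.eventually_iff.1 hev
  let φ : ContDiffBump p := ⟨r / 2, r, by linarith, by linarith⟩
  have hts : tsupport φ = Metric.closedBall p r := φ.tsupport_eq
  have hφ : ContDiff ℝ (⊤ : ℕ∞) φ := φ.contDiff
  have hφc : HasCompactSupport φ := φ.hasCompactSupport
  have hφ0 : tsupport φ ⊆ ({(0 : E3)}ᶜ) := fun x hx => (hball (hts ▸ hx)).2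
  have hcont : Continuous (fun x => φ x ^ 2 * symbolForm α k w x) := by
    have := hφ.continuous.mul
      (continuous_mul_of_cutoff hφ.continuous hφ0 (continuousOn_symbolForm α k w))
    refine this.congr fun x => ?_
    simp only [Pi.mul_apply]
    ring
  have hcs : HasCompactSupport (fun x => φ x ^ 2 * symbolForm α k w x) := by
    refine hφc.mono fun x hx h0 => hx ?_
    simp [h0]
  have hint := hcont.integrable_of_hasCompactSupport hcs (μ := (volume : Measure E3))
  have hJ : (∫ x, φ x ^ 2 * symbolForm α k w x) < 0 := by
    have hpos : 0 < ∫ x, -(φ x ^ 2 * symbolForm α k w x) := by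
      refine hcont.neg.integral_pos_of_hasCompactSupport_nonneg_nonzero (x := p) hcs.neg ?_ ?_
      · intro x
        by_cases hx : x ∈ tsupport φ
        · have := (hball (hts ▸ hx)).1
          have := mul_nonneg (sq_nonneg (φ x)) (by linarith : 0 ≤ -symbolForm α k w x)
          simp only [Pi.zero_apply]
          linarith
        · simp [image_eq_zero_of_notMem_tsupport hx]
      · have h1 : φ p = 1 := φ.one_of_mem_closedBall (by simp [φ.rIn_pos.le])
        simp [h1, hq.ne]
    rw [integral_neg] at hpos
    linarith
  obtain ⟨N, hN⟩ : ∃ N : ℝ,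
      (∫ x, density α w φ x) + N ^ 2 * (∫ x, φ x ^ 2 * symbolForm α k w x) < 0 := by
    set J := ∫ x, φ x ^ 2 * symbolForm α k w x
    set I := ∫ x, density α w φ x
    refine ⟨√((|I| + 1) / -J), ?_⟩
    have : 0 < -J := by linarith
    rw [Real.sq_sqrt (by positivity)]
    have e : (|I| + 1) / -J * J = -(|I| + 1) := by
      have := hJ.ne
      field_simp
    rw [e]
    linarith [le_abs_self I]
  have hC : ContDiff ℝ (⊤ : ℕ∞) (fun x => Real.cos (phase N x)) := (contDiff_phase N).cos
  have hS : ContDiff ℝ (⊤ : ℕ∞) (fun x => Real.sin (phase N x)) := (contDiff_phase N).sin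
  have hsub : ∀ g : E3 → ℝ, tsupport (fun y => φ y * g y) ⊆ ({(0 : E3)}ᶜ) := fun g =>
    (closure_mono (Function.support_mul_subset_left _ _)).trans hφ0
  have hIC := integrable_density α w (hφ.mul hC) hφc.mul_right (hsub _)
  have hIS := integrable_density α w (hφ.mul hS) hφc.mul_right (hsub _)
  have hsum : (∫ x, density α w (fun y => φ y * Real.cos (phase N y)) x)
      + (∫ x, density α w (fun y => φ y * Real.sin (phase N y)) x) < 0 := by
    rw [← integral_add hIC hIS]
    simp_rw [density_cos_add_density_sin α N k w hφ hC hS (pd_cos_phase N) (pd_sin_phase N)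
      (fun x => Real.cos_sq_add_sin_sq _)]
    rw [integral_add (integrable_density α w hφ hφc hφ0) (hint.const_mul _), integral_const_mul]
    exact hN
  rcases lt_or_ge (∫ x, density α w (fun y => φ y * Real.cos (phase N y)) x) 0 with h1 | h1
  · exact ⟨_, isTestOn_mul_const w (hφ.mul hC) hφc.mul_right (hsub _), h1⟩
  · exact ⟨_, isTestOn_mul_const w (hφ.mul hS) hφc.mul_right (hsub _),
      by change (∫ x, density α w (fun y => φ y * Real.sin (phase N y)) x) < 0; linarith⟩
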